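/- In the model of superfunctions on Minkowski superspacetime fixed in the context, a smooth map f : ℝ⁴ → Λ satisfies the chirality equations D̄₁ f = 0 and D̄₂ f = 0 if and only if there exist (necessarily unique) smooth functions φ, F : ℝ⁴ → ℂ and ψ₁, ψ₂ : ℝ⁴ → ℂ such that f = φ + Σ_a θ^a ψ_a + F·θ¹∧θ² − i Σ_{μ,a,b} Γ^μ_{ab}·θ^a∧θ̄^b·∂_μφ − i Σ_{μ,a,b,c} Γ^μ_{ab}·θ^c∧θ^a∧θ̄^b·∂_μψ_c + (□φ)·θ¹∧θ²∧θ̄¹∧θ̄², where □ := ∂₀² − ∂₁² − ∂₂² − ∂₃². -/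

import Mathlib

noncomputable section

/-- Coordinates of the exterior algebra `Λ = ⋀(ℂ⁴)` with distinguished basis
`θ¹, θ², θ̄¹, θ̄²` (indexed `0,1,2,3`): an element is given by its coefficients on the
basis monomials `θ_S` (`S ⊆ {0,1,2,3}`, factors in increasing index order). -/
abbrev Lam : Type := Finset (Fin 4) → ℂ

/-- The Koszul sign `(−1)^{#{j ∈ S : j < i}}`. -/
def ksign (i : Fin 4) (S : Finset (Fin 4)) : ℂ := (-1 : ℂ) ^ (S.filter (· < i)).card

/-- Left exterior multiplication `e_v` by the `i`-th basis vector, in coordinates. -/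
def eOp (i : Fin 4) (a : Lam) : Lam := fun S =>
  if i ∈ S then ksign i S * a (S.erase i) else 0

/-- The odd derivation `∂_v` dual to the `i`-th basis vector (`∂_v(w) = δ_{v,w}` on basis
vectors, graded Leibniz rule), in coordinates. -/
def dOp (i : Fin 4) (a : Lam) : Lam := fun S =>
  if i ∈ S then 0 else ksign i S * a (insert i S)

/-- The matrices `Γ⁰ = I`, `Γ¹ = diag(1,−1)`, `Γ² = ((0,1),(1,0))`, `Γ³ = ((0,−i),(i,0))`. -/
def Gam : Fin 4 → Matrix (Fin 2) (Fin 2) ℂ :=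
  ![!![1, 0; 0, 1], !![1, 0; 0, -1], !![0, 1; 1, 0], !![0, -Complex.I; Complex.I, 0]]

/-- Index of `θ^a` (for `a ∈ {1,2}`, i.e. `a : Fin 2`). -/
def θi (a : Fin 2) : Fin 4 := ⟨a.val, by have := a.isLt; omega⟩

/-- Index of `θ̄^a` (for `a ∈ {1,2}`, i.e. `a : Fin 2`). -/
def θbi (a : Fin 2) : Fin 4 := ⟨a.val + 2, by have := a.isLt; omega⟩

/-- The partial derivative `∂_μ` of a superfunction `f : ℝ⁴ → Λ`. -/
def pd (μ : Fin 4) (f : (Fin 4 → ℝ) → Lam) : (Fin 4 → ℝ) → Lam :=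
  fun x => fderiv ℝ f x (Pi.single μ 1)

/-- The supersymmetry generator `Q_a = ∂_{θ^a} + i Σ_{μ,b} Γ^μ_{ab} e_{θ̄^b} ∂_μ`. -/
def QOp (a : Fin 2) (f : (Fin 4 → ℝ) → Lam) : (Fin 4 → ℝ) → Lam :=
  fun x => dOp (θi a) (f x) +
    ∑ μ : Fin 4, ∑ b : Fin 2, (Complex.I * Gam μ a b) • eOp (θbi b) (pd μ f x)

/-- The supersymmetry generator `Q̄_b = ∂_{θ̄^b} + i Σ_{μ,a} Γ^μ_{ab} e_{θ^a} ∂_μ`. -/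
def QbOp (b : Fin 2) (f : (Fin 4 → ℝ) → Lam) : (Fin 4 → ℝ) → Lam :=
  fun x => dOp (θbi b) (f x) +
    ∑ μ : Fin 4, ∑ a : Fin 2, (Complex.I * Gam μ a b) • eOp (θi a) (pd μ f x)


/-- The left-invariant odd derivative `D̄_b = ∂_{θ̄^b} − i Σ_{μ,a} Γ^μ_{ab} e_{θ^a} ∂_μ`. -/
def DbOp (b : Fin 2) (f : (Fin 4 → ℝ) → Lam) : (Fin 4 → ℝ) → Lam :=
  fun x => dOp (θbi b) (f x) -
    ∑ μ : Fin 4, ∑ a : Fin 2, (Complex.I * Gam μ a b) • eOp (θi a) (pd μ f x)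

/-- The unit `1 ∈ Λ` (the empty exterior monomial), in coordinates. -/
def unitLam : Lam := fun S => if S = ∅ then 1 else 0

/-- The partial derivative `∂_μ` of a scalar function `g : ℝ⁴ → ℂ`. -/
def pdC (μ : Fin 4) (g : (Fin 4 → ℝ) → ℂ) : (Fin 4 → ℝ) → ℂ :=
  fun x => fderiv ℝ g x (Pi.single μ 1)

/-- The wave operator `□ = ∂₀² − ∂₁² − ∂₂² − ∂₃²` on scalar functions. -/
def boxC (g : (Fin 4 → ℝ) → ℂ) : (Fin 4 → ℝ) → ℂ :=
  fun x => pdC 0 (pdC 0 g) x - pdC 1 (pdC 1 g) x - pdC 2 (pdC 2 g) x - pdC 3 (pdC 3 g) x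

/-- The chiral expansion
`φ + Σ_a θ^a ψ_a + F θ¹∧θ² − i Σ Γ^μ_{ab} θ^a∧θ̄^b ∂_μφ
  − i Σ Γ^μ_{ab} θ^c∧θ^a∧θ̄^b ∂_μψ_c + (□φ) θ¹∧θ²∧θ̄¹∧θ̄²`
of a superfunction with component fields `φ`, `ψ₁, ψ₂`, `F`. -/
def chiralExpansion (φ F : (Fin 4 → ℝ) → ℂ) (ψ : Fin 2 → (Fin 4 → ℝ) → ℂ) :
    (Fin 4 → ℝ) → Lam := fun x =>
  (φ x) • unitLam
  + ∑ a : Fin 2, (ψ a x) • eOp (θi a) unitLam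
  + (F x) • eOp (θi 0) (eOp (θi 1) unitLam)
  - ∑ μ : Fin 4, ∑ a : Fin 2, ∑ b : Fin 2,
      (Complex.I * Gam μ a b * pdC μ φ x) • eOp (θi a) (eOp (θbi b) unitLam)
  - ∑ μ : Fin 4, ∑ a : Fin 2, ∑ b : Fin 2, ∑ c : Fin 2,
      (Complex.I * Gam μ a b * pdC μ (ψ c) x) •
        eOp (θi c) (eOp (θi a) (eOp (θbi b) unitLam))
  + (boxC φ x) • eOp (θi 0) (eOp (θi 1) (eOp (θbi 0) (eOp (θbi 1) unitLam)))

/-!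
Write `D̄_b = ∂_{θ̄^b} − N_b` with `N_b = Σ_{μ,a} i Γ^μ_{ab} e_{θ^a} ∂_μ`. The operators `N_b`
anticommute with each other and with every `θ̄^c` and `∂_{θ̄^c}`; in particular `N_b² = 0` and
`(∂_{θ̄^b} − N_b)(1 − N_b θ̄^b) = (1 − N_b θ̄^b) ∂_{θ̄^b}`. Hence the invertible operator
`U = (1 − N_1 θ̄¹)(1 − N_2 θ̄²)` conjugates each `D̄_b` into `∂_{θ̄^b}`, and the chiral
superfunctions are exactly the `U h` with `h = φ + Σ_a θ^a ψ_a + F θ¹∧θ²` free of `θ̄`. In the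
expansion of `U h` the operator `□` arises as `−det (Σ_μ i Γ^μ_{ab} ∂_μ)`.
-/

open scoped ContDiff

section Anticommute

variable {R : Type*} [Ring R] {a b c d n t : R}

/-- The relation `a b = -b a` between odd elements of a ring. -/
def Anticommute (a b : R) : Prop := a * b = -(b * a)

theorem Anticommute.symm (h : Anticommute a b) : Anticommute b a := by
  rw [Anticommute, h, neg_neg]

theorem Anticommute.mul_mul (h : Anticommute a b) (had : Commute a d) (hcb : Commute c b)
    (hcd : Commute c d) : Anticommute (a * c) (b * d) :=
  calc a * c * (b * d) = a * b * (c * d) := hcb.mul_mul_mul_comm a d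
    _ = -(b * a * (d * c)) := by rw [h, hcd.eq, neg_mul]
    _ = -(b * d * (a * c)) := by rw [had.mul_mul_mul_comm]

theorem Anticommute.mul_left_of_commute (h : Anticommute a b) (hcb : Commute c b) :
    Anticommute (a * c) b := by
  simpa only [mul_one] using h.mul_mul (.one_right a) hcb (.one_right c)

theorem Anticommute.commute_mul_right (hb : Anticommute a b) (hc : Anticommute a c) :
    Commute a (b * c) :=
  calc a * (b * c) = -(b * (a * c)) := by rw [← mul_assoc, hb, neg_mul, mul_assoc]
    _ = b * c * a := by rw [hc, mul_neg, neg_neg, mul_assoc]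

theorem Anticommute.commute_one_sub_mul (hb : Anticommute a b) (hc : Anticommute a c) :
    Commute a (1 - b * c) :=
  (Commute.one_right a).sub_right (hb.commute_mul_right hc)

theorem Anticommute.sum_left {ι : Type*} {s : Finset ι} {x : ι → R}
    (h : ∀ i ∈ s, Anticommute (x i) b) : Anticommute (∑ i ∈ s, x i) b := by
  rw [Anticommute, Finset.sum_mul, Finset.mul_sum, ← Finset.sum_neg_distrib]
  exact Finset.sum_congr rfl h

theorem Anticommute.mul_self_eq_zero [IsAddTorsionFree R] (h : Anticommute a a) : a * a = 0 :=
  self_eq_neg.mp h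

theorem Anticommute.isNilpotent_mul (h : Anticommute n t) (hn : n * n = 0) :
    IsNilpotent (n * t) := by
  refine ⟨2, ?_⟩
  calc (n * t) ^ 2 = n * (t * n) * t := by simp only [sq, mul_assoc]
    _ = -(n * n * t * t) := by rw [h.symm]; simp only [mul_neg, neg_mul, mul_assoc]
    _ = 0 := by rw [hn, zero_mul, zero_mul, neg_zero]

theorem Anticommute.sub_mul_one_sub_mul (hdn : Anticommute d n) (hn : n * n = 0)
    (hdt : d * t + t * d = 1) : (d - n) * (1 - n * t) = (1 - n * t) * d :=
  calc (d - n) * (1 - n * t) = d - n - d * n * t + n * n * t := by noncomm_ring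
    _ = d - n * (1 - d * t) := by rw [hdn, hn]; noncomm_ring
    _ = d - n * (t * d) := by rw [sub_eq_of_eq_add' hdt.symm]
    _ = (1 - n * t) * d := by noncomm_ring

end Anticommute

section SmoothMaps

variable {E W V : Type*} [NormedAddCommGroup E] [NormedSpace ℝ E]
  [NormedAddCommGroup W] [NormedSpace ℂ W] [NormedAddCommGroup V] [NormedSpace ℂ V]

variable (E W) in
/-- The complex vector space of smooth maps from a real normed space `E` to a complex normed space
`W`. The operators of the theory are linear endomorphisms of it. -/
def smoothMaps : Submodule ℂ (E → W) where
  carrier := {f | ContDiff ℝ ∞ f}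
  add_mem' := fun {f g} (hf : ContDiff ℝ ∞ f) (hg : ContDiff ℝ ∞ g) => hf.add hg
  zero_mem' := (contDiff_zero_fun : ContDiff ℝ ∞ (0 : E → W))
  smul_mem' := fun _ f (hf : ContDiff ℝ ∞ f) => contDiff_const.smul hf

-- Without this shortcut `simp` does not recognize the subtraction of
-- `Module.End ℂ (smoothMaps E W)` as that of a ring.
instance : AddCommGroup (smoothMaps E W) := (smoothMaps E W).addCommGroup

instance : CoeFun (smoothMaps E W) fun _ => E → W := ⟨Subtype.val⟩

theorem smoothMaps.contDiff (f : smoothMaps E W) : ContDiff ℝ ∞ (f : E → W) :=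
  f.2

theorem smoothMaps.differentiable (f : smoothMaps E W) : Differentiable ℝ (f : E → W) :=
  (contDiff f).differentiable (by simp)

/-- The operator on smooth maps induced by a constant-coefficient linear map of the targets. -/
def postcomp (L : W →L[ℂ] V) : smoothMaps E W →ₗ[ℂ] smoothMaps E V where
  toFun f := ⟨fun x => L (f x), (L.restrictScalars ℝ).contDiff.comp (smoothMaps.contDiff f)⟩
  map_add' f g := by ext x; simp
  map_smul' c f := by ext x; simp

@[simp]
theorem coe_postcomp (L : W →L[ℂ] V) (f : smoothMaps E W) :
    (postcomp L f : E → V) = fun x => L (f x) := rfl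

theorem Anticommute.postcomp {L L' : W →L[ℂ] W} (h : Anticommute L L') :
    Anticommute (postcomp L : Module.End ℂ (smoothMaps E W)) (postcomp L') := by
  ext f x
  exact congr($h (f x))

/-- The smooth map `x ↦ φ x • w` with constant direction `w`. -/
def smulConst (w : W) : smoothMaps E ℂ →ₗ[ℂ] smoothMaps E W :=
  postcomp (ContinuousLinearMap.toSpanSingleton ℂ w)

@[simp]
theorem coe_smulConst (w : W) (φ : smoothMaps E ℂ) :
    (smulConst w φ : E → W) = fun x => φ x • w := rfl

theorem postcomp_smulConst (L : W →L[ℂ] V) (w : W) (φ : smoothMaps E ℂ) :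
    postcomp L (smulConst w φ) = smulConst (L w) φ := by
  ext x
  simp

@[simp]
theorem smulConst_zero (φ : smoothMaps E ℂ) : smulConst (0 : W) φ = 0 := by
  ext x
  simp

theorem smulConst_neg (w : W) (φ : smoothMaps E ℂ) : smulConst (-w) φ = -smulConst w φ := by
  ext x
  simp

/-- The directional derivative of smooth maps along a constant vector. -/
def directionalDeriv (v : E) : Module.End ℂ (smoothMaps E W) where
  toFun f := ⟨fun x => fderiv ℝ f x v,
    (ContinuousLinearMap.apply ℝ W v).contDiff.comp
      ((smoothMaps.contDiff f).fderiv_right (m := ∞) (by simp))⟩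
  map_add' f g := by
    ext x
    simp [fderiv_add (smoothMaps.differentiable f x) (smoothMaps.differentiable g x)]
  map_smul' c f := by
    ext x
    simp [fderiv_const_smul (smoothMaps.differentiable f x) c]

theorem coe_directionalDeriv (v : E) (f : smoothMaps E W) :
    (directionalDeriv v f : E → W) = fun x => fderiv ℝ f x v := rfl

theorem directionalDeriv_postcomp (v : E) (L : W →L[ℂ] V) (f : smoothMaps E W) :
    directionalDeriv v (postcomp L f) = postcomp L (directionalDeriv v f) := by
  ext x
  exact congr($(((L.restrictScalars ℝ).hasFDerivAt.comp x
    (smoothMaps.differentiable f x).hasFDerivAt).fderiv) v)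

theorem directionalDeriv_commute (v w : E) :
    Commute (directionalDeriv v : Module.End ℂ (smoothMaps E W)) (directionalDeriv w) := by
  have second_deriv (v w : E) (f : smoothMaps E W) (x : E) :
      directionalDeriv v (directionalDeriv w f) x = fderiv ℝ (fderiv ℝ f) x v w := by
    have hf : Differentiable ℝ (fderiv ℝ f) :=
      ((smoothMaps.contDiff f).fderiv_right (m := ∞) (by simp)).differentiable (by simp)
    simp [coe_directionalDeriv, fderiv_clm_apply (hf x) (differentiableAt_const w)]
  ext f x
  have symm : IsSymmSndFDerivAt ℝ f x := (smoothMaps.contDiff f).contDiffAt.isSymmSndFDerivAt (by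
    rw [minSmoothness_of_isRCLikeNormedField]
    exact WithTop.coe_le_coe.mpr le_top)
  simpa only [Module.End.mul_apply, second_deriv] using symm v w

end SmoothMaps

section ExteriorAlgebra

variable {i j : Fin 4} {S : Finset (Fin 4)}

theorem ksign_insert (hj : j ∉ S) :
    ksign i (insert j S) = (if j < i then -1 else 1) * ksign i S := by
  by_cases hji : j < i <;> simp [ksign, Finset.filter_insert, hji, hj, pow_succ']

theorem ksign_eq_mul_ksign_erase (hj : j ∈ S) :
    ksign i S = (if j < i then -1 else 1) * ksign i (S.erase j) := by
  rw [← ksign_insert (Finset.notMem_erase j S), Finset.insert_erase hj]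

theorem ksign_mul_self : ksign i S * ksign i S = 1 := by
  rw [ksign, ← mul_pow]
  norm_num

/-- Left exterior multiplication `e_v` as a continuous linear endomorphism of `Λ`. -/
def exteriorMul (i : Fin 4) : Lam →L[ℂ] Lam :=
  LinearMap.toContinuousLinearMap
    { toFun := eOp i
      map_add' := fun a b => by ext S; simp [eOp, mul_add, ite_add_ite]
      map_smul' := fun c a => by ext S; simp [eOp, mul_left_comm] }

/-- The odd derivation `∂_v` as a continuous linear endomorphism of `Λ`. -/
def contraction (i : Fin 4) : Lam →L[ℂ] Lam :=
  LinearMap.toContinuousLinearMap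
    { toFun := dOp i
      map_add' := fun a b => by ext S; simp [dOp, mul_add, ite_add_ite]
      map_smul' := fun c a => by ext S; simp [dOp, mul_left_comm] }

@[simp]
theorem exteriorMul_apply (i : Fin 4) (v : Lam) : exteriorMul i v = eOp i v := rfl

@[simp]
theorem contraction_apply (i : Fin 4) (v : Lam) : contraction i v = dOp i v := rfl

theorem exteriorMul_anticommute (i j : Fin 4) :
    Anticommute (exteriorMul i) (exteriorMul j) := by
  ext v S
  change eOp i (eOp j v) S = -eOp j (eOp i v) S
  obtain rfl | hij := eq_or_ne i j
  · simp [eOp]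
  by_cases hi : i ∈ S <;> by_cases hj : j ∈ S <;> simp only [eOp, Finset.mem_erase, hi, hj, hij,
    hij.symm, ne_eq, not_false_eq_true, and_self, and_false, if_true, if_false, mul_zero, neg_zero]
  rw [ksign_eq_mul_ksign_erase (i := i) hj, ksign_eq_mul_ksign_erase (i := j) hi,
    Finset.erase_right_comm]
  rcases hij.lt_or_gt with h | h <;> simp only [h, h.not_gt, if_true, if_false] <;> ring

theorem contraction_anticommute_exteriorMul (hij : i ≠ j) :
    Anticommute (contraction i) (exteriorMul j) := by
  ext v S
  change dOp i (eOp j v) S = -eOp j (dOp i v) S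
  by_cases hi : i ∈ S <;> by_cases hj : j ∈ S <;> simp only [eOp, dOp, Finset.mem_erase,
    Finset.mem_insert, hi, hj, hij, hij.symm, ne_eq, not_false_eq_true, and_self, and_false,
    or_true, or_self, if_true, if_false, mul_zero, neg_zero]
  rw [ksign_insert hi, ksign_eq_mul_ksign_erase (i := i) hj, Finset.erase_insert_of_ne hij]
  rcases hij.lt_or_gt with h | h <;> simp only [h, h.not_gt, if_true, if_false] <;> ring

theorem contraction_mul_exteriorMul_add (i : Fin 4) :
    contraction i * exteriorMul i + exteriorMul i * contraction i = 1 := by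
  ext v S
  change dOp i (eOp i v) S + eOp i (dOp i v) S = v S
  by_cases hi : i ∈ S
  · simp [eOp, dOp, hi, ksign_eq_mul_ksign_erase (i := i) hi, ← mul_assoc, ksign_mul_self]
  · simp [eOp, dOp, hi, ksign_insert hi, ← mul_assoc, ksign_mul_self]

theorem eOp_eOp_comm (i j : Fin 4) (v : Lam) : eOp i (eOp j v) = -eOp j (eOp i v) :=
  congr($(exteriorMul_anticommute i j) v)

theorem eOp_eOp_self (i : Fin 4) (v : Lam) : eOp i (eOp i v) = 0 :=
  self_eq_neg.mp (eOp_eOp_comm i i v)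

theorem eOp_zero (i : Fin 4) : eOp i 0 = 0 := map_zero (exteriorMul i)

theorem eOp_neg (i : Fin 4) (v : Lam) : eOp i (-v) = -eOp i v := map_neg (exteriorMul i) v

theorem eOp_eOp_eq_zero {v : Lam} (h : eOp i v = 0) (j : Fin 4) : eOp i (eOp j v) = 0 := by
  rw [eOp_eOp_comm, h, eOp_zero, neg_zero]

theorem eOp_theta_eOp_theta_eq_zero {a : Fin 2} {v : Lam} (h : eOp (θi a) v = 0) :
    eOp (θi 0) (eOp (θi 1) v) = 0 := by
  obtain rfl | rfl : a = 0 ∨ a = 1 := by lia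
  · exact eOp_eOp_eq_zero h _
  · rw [h, eOp_zero]

theorem dOp_eOp_eq_zero {v : Lam} (hij : i ≠ j) (h : dOp i v = 0) : dOp i (eOp j v) = 0 := by
  have anticomm : dOp i (eOp j v) = -eOp j (dOp i v) :=
    congr($(contraction_anticommute_exteriorMul hij) v)
  rw [anticomm, h, eOp_zero, neg_zero]

theorem dOp_unitLam (i : Fin 4) : dOp i unitLam = 0 := by
  ext S
  simp [dOp, unitLam]

theorem apply_eq_zero_of_dOp_eq_zero {v : Lam} (h : dOp i v = 0) (hi : i ∈ S) : v S = 0 := by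
  simpa [dOp, ksign, Finset.insert_erase hi] using congrFun h (S.erase i)

theorem eOp_single (hi : i ∉ S) (c : ℂ) :
    eOp i (Pi.single S c) = Pi.single (insert i S) (ksign i S * c) := by
  ext T
  obtain rfl | hT := eq_or_ne T (insert i S)
  · simp [eOp, hi, ksign_insert hi]
  · have (hiT : i ∈ T) : T.erase i ≠ S := fun h => hT (h ▸ (Finset.insert_erase hiT).symm)
    by_cases hiT : i ∈ T <;> simp [eOp, hT, hiT, this]

theorem unitLam_eq_single : unitLam = Pi.single ∅ 1 := by
  ext S
  simp [unitLam, Pi.single_apply]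

theorem eOp_unitLam (i : Fin 4) : eOp i unitLam = Pi.single {i} 1 := by
  rw [unitLam_eq_single, eOp_single (Finset.notMem_empty i)]
  simp [ksign]

theorem eOp_theta_eOp_theta_unitLam :
    eOp (θi 0) (eOp (θi 1) unitLam) = Pi.single {θi 0, θi 1} 1 := by
  rw [eOp_unitLam, eOp_single (by decide)]
  simp [ksign, Finset.filter_singleton, show ¬θi 1 < θi 0 by decide]

theorem eOp_apply_eq_zero {v : Lam} (hv : ∀ S, i ∉ S → v S = 0) (hi : i ∉ S) :
    eOp j v S = 0 := by
  simp [eOp, hv (S.erase j) (by simp [hi])]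

theorem eOp_apply_of_notMem (v : Lam) (hi : i ∉ S) : eOp i v S = 0 := if_neg hi

/-- The element `z + Σ_a s_a θ^a + w θ¹∧θ²` of the subalgebra of `Λ` generated by the `θ^a`. -/
def thetaPoly (z w : ℂ) (s : Fin 2 → ℂ) : Lam :=
  z • unitLam + ∑ a : Fin 2, s a • eOp (θi a) unitLam + w • eOp (θi 0) (eOp (θi 1) unitLam)

theorem thetaPoly_eq_sum_single (z w : ℂ) (s : Fin 2 → ℂ) :
    thetaPoly z w s = Pi.single ∅ z + ∑ a : Fin 2, Pi.single {θi a} (s a) +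
      Pi.single {θi 0, θi 1} w := by
  rw [thetaPoly, eOp_theta_eOp_theta_unitLam]
  simp only [eOp_unitLam]
  simp only [unitLam_eq_single, ← Pi.single_smul, smul_eq_mul, mul_one]

theorem thetaPoly_apply_empty (z w : ℂ) (s : Fin 2 → ℂ) : thetaPoly z w s ∅ = z := by
  simp [thetaPoly_eq_sum_single, Ne.symm]

theorem thetaPoly_apply_theta (z w : ℂ) (s : Fin 2 → ℂ) (a : Fin 2) :
    thetaPoly z w s {θi a} = s a := by
  fin_cases a <;> simp +decide [thetaPoly_eq_sum_single]

theorem thetaPoly_apply_theta_theta (z w : ℂ) (s : Fin 2 → ℂ) :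
    thetaPoly z w s {θi 0, θi 1} = w := by
  simp +decide [thetaPoly_eq_sum_single]

theorem theta_ne_thetaBar (a b : Fin 2) : θi a ≠ θbi b := by
  revert a b
  decide

theorem thetaBar_injective : Function.Injective θbi := by
  decide

theorem dOp_thetaBar_thetaPoly (b : Fin 2) (z w : ℂ) (s : Fin 2 → ℂ) :
    dOp (θbi b) (thetaPoly z w s) = 0 := by
  have dOp_theta (a : Fin 2) {v : Lam} (hv : dOp (θbi b) v = 0) :
      dOp (θbi b) (eOp (θi a) v) = 0 := dOp_eOp_eq_zero (theta_ne_thetaBar a b).symm hv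
  rw [← contraction_apply]
  simp only [thetaPoly, map_add, map_sum, map_smul, contraction_apply, dOp_unitLam, dOp_theta,
    smul_zero, Finset.sum_const_zero, add_zero]

theorem eq_thetaPoly_of_dOp_thetaBar_eq_zero {v : Lam} (hv : ∀ b, dOp (θbi b) v = 0) :
    v = thetaPoly (v ∅) (v {θi 0, θi 1}) fun a => v {θi a} := by
  have subsets_of_theta : ∀ S : Finset (Fin 4),
      (∃ b, θbi b ∈ S) ∨ S = ∅ ∨ (∃ a, S = {θi a}) ∨ S = {θi 0, θi 1} := by decide
  ext S
  obtain ⟨b, hb⟩ | rfl | ⟨a, rfl⟩ | rfl := subsets_of_theta S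
  · rw [apply_eq_zero_of_dOp_eq_zero (hv b) hb,
      apply_eq_zero_of_dOp_eq_zero (dOp_thetaBar_thetaPoly b _ _ _) hb]
  · rw [thetaPoly_apply_empty]
  · rw [thetaPoly_apply_theta]
  · rw [thetaPoly_apply_theta_theta]

end ExteriorAlgebra

section Superfields

variable {W V : Type*} [NormedAddCommGroup W] [NormedSpace ℂ W] [NormedAddCommGroup V]
  [NormedSpace ℂ V]

/-- The smooth complex functions on `ℝ⁴`, which serve as component fields. -/
abbrev ScalarField : Type := smoothMaps (Fin 4 → ℝ) ℂ

/-- The smooth superfunctions, that is the smooth maps `ℝ⁴ → Λ`. -/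
abbrev Superfield : Type := smoothMaps (Fin 4 → ℝ) Lam

/-- The first-order operator `Σ_μ i Γ^μ_{ab} ∂_μ` on smooth maps on `ℝ⁴`. The factor `i` of the
chirality operators is absorbed here. -/
def sigmaDeriv (a b : Fin 2) : Module.End ℂ (smoothMaps (Fin 4 → ℝ) W) :=
  ∑ μ, (Complex.I * Gam μ a b) • directionalDeriv (Pi.single μ 1)

/-- The wave operator `∂₀² − ∂₁² − ∂₂² − ∂₃²` on smooth maps on `ℝ⁴`. -/
def waveOp : Module.End ℂ (smoothMaps (Fin 4 → ℝ) W) :=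
  directionalDeriv (Pi.single 0 1) ^ 2 - directionalDeriv (Pi.single 1 1) ^ 2 -
    directionalDeriv (Pi.single 2 1) ^ 2 - directionalDeriv (Pi.single 3 1) ^ 2

theorem coe_sigmaDeriv (a b : Fin 2) (f : smoothMaps (Fin 4 → ℝ) W) :
    (sigmaDeriv a b f : (Fin 4 → ℝ) → W) = fun x =>
      ∑ μ, (Complex.I * Gam μ a b) • fderiv ℝ f x (Pi.single μ 1) := by
  funext x
  simp only [sigmaDeriv, LinearMap.sum_apply, LinearMap.smul_apply, Submodule.coe_sum,
    Submodule.coe_smul, Finset.sum_apply, Pi.smul_apply, coe_directionalDeriv]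

theorem coe_waveOp (φ : ScalarField) : (waveOp φ : (Fin 4 → ℝ) → ℂ) = boxC φ := by
  simp only [waveOp, sq]
  rfl

theorem sigmaDeriv_postcomp (a b : Fin 2) (L : W →L[ℂ] V) (f : smoothMaps (Fin 4 → ℝ) W) :
    sigmaDeriv a b (postcomp L f) = postcomp L (sigmaDeriv a b f) := by
  simp only [sigmaDeriv, LinearMap.sum_apply, LinearMap.smul_apply, map_sum, map_smul,
    directionalDeriv_postcomp]

theorem sigmaDeriv_smulConst (a b : Fin 2) (w : W) (φ : ScalarField) :
    sigmaDeriv a b (smulConst w φ) = smulConst w (sigmaDeriv a b φ) :=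
  sigmaDeriv_postcomp a b _ φ

theorem sigmaDeriv_commute_postcomp (a b : Fin 2) (L : W →L[ℂ] W) :
    Commute (sigmaDeriv a b : Module.End ℂ (smoothMaps (Fin 4 → ℝ) W)) (postcomp L) :=
  LinearMap.ext (sigmaDeriv_postcomp a b L)

theorem sigmaDeriv_commute (a b a' b' : Fin 2) :
    Commute (sigmaDeriv a b : Module.End ℂ (smoothMaps (Fin 4 → ℝ) W)) (sigmaDeriv a' b') :=
  Commute.sum_left _ _ _ fun _ _ => Commute.sum_right _ _ _ fun _ _ =>
    ((directionalDeriv_commute _ _).smul_left _).smul_right _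

theorem sigmaDeriv_mul_sub_mul_eq_waveOp :
    (sigmaDeriv 1 0 * sigmaDeriv 0 1 - sigmaDeriv 0 0 * sigmaDeriv 1 1 :
      Module.End ℂ (smoothMaps (Fin 4 → ℝ) W)) = waveOp := by
  have h01 := directionalDeriv_commute (W := W) (Pi.single 0 1 : Fin 4 → ℝ) (Pi.single 1 1)
  have h23 := directionalDeriv_commute (W := W) (Pi.single 2 1 : Fin 4 → ℝ) (Pi.single 3 1)
  simp only [sigmaDeriv, waveOp, Gam, Fin.sum_univ_four]
  simp only [Fin.isValue, Matrix.cons_val_zero, Matrix.of_apply, Matrix.cons_val',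
    Matrix.cons_val_fin_one, mul_one, Matrix.cons_val_one, Matrix.cons_val, mul_zero, zero_smul,
    add_zero, mul_neg, mul_add, Algebra.mul_smul_comm, add_mul, Algebra.smul_mul_assoc, smul_add,
    smul_smul, Complex.I_mul_I, h01.eq, neg_mul, neg_neg, one_smul, zero_add, h23.eq, sq]
  module

/-- Left multiplication of superfields by `θ^a`. -/
def thetaMul (a : Fin 2) : Module.End ℂ Superfield := postcomp (exteriorMul (θi a))

/-- Left multiplication of superfields by `θ̄^b`. -/
def thetaBarMul (b : Fin 2) : Module.End ℂ Superfield := postcomp (exteriorMul (θbi b))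

/-- The odd derivation `∂_{θ̄^b}` of superfields. -/
def thetaBarDeriv (b : Fin 2) : Module.End ℂ Superfield := postcomp (contraction (θbi b))

/-- The odd operator `N_b = Σ_{μ,a} i Γ^μ_{ab} e_{θ^a} ∂_μ`. -/
def oddShift (b : Fin 2) : Module.End ℂ Superfield := ∑ a, thetaMul a * sigmaDeriv a b

/-- The chirality operator `D̄_b = ∂_{θ̄^b} − N_b` on smooth superfields. -/
def chiralityOp (b : Fin 2) : Module.End ℂ Superfield := thetaBarDeriv b - oddShift b

/-- The factor `1 − N_b θ̄^b` of the conjugating operator `chiralTwist`. -/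
def twistFactor (b : Fin 2) : Module.End ℂ Superfield := 1 - oddShift b * thetaBarMul b

/-- The operator `(1 − N_1 θ̄¹)(1 − N_2 θ̄²)`, which conjugates each `D̄_b` into `∂_{θ̄^b}`. -/
def chiralTwist : Module.End ℂ Superfield := twistFactor 0 * twistFactor 1

theorem coe_chiralityOp (b : Fin 2) (f : Superfield) :
    (chiralityOp b f : (Fin 4 → ℝ) → Lam) = DbOp b f := by
  funext x
  have oddShift_apply : (oddShift b f : (Fin 4 → ℝ) → Lam) x =
      ∑ a, ∑ μ, (Complex.I * Gam μ a b) • eOp (θi a) (pd μ f x) := by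
    simp only [oddShift, thetaMul, sigmaDeriv, LinearMap.sum_apply, Module.End.mul_apply,
      LinearMap.smul_apply, map_sum, map_smul, Submodule.coe_sum, Submodule.coe_smul,
      Finset.sum_apply, Pi.smul_apply, coe_postcomp, coe_directionalDeriv, exteriorMul_apply, pd]
  rw [DbOp, Finset.sum_comm, ← oddShift_apply]
  rfl

theorem oddShift_anticommute (b c : Fin 2) : Anticommute (oddShift b) (oddShift c) :=
  .sum_left fun _ _ => .symm <| .sum_left fun _ _ =>
    (exteriorMul_anticommute _ _).postcomp.mul_mul (sigmaDeriv_commute_postcomp _ _ _).symm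
      (sigmaDeriv_commute_postcomp _ _ _) (sigmaDeriv_commute _ _ _ _)

theorem oddShift_mul_self (b : Fin 2) : oddShift b * oddShift b = 0 := by
  have : IsAddTorsionFree (Module.End ℂ Superfield) := .of_isTorsionFree ℂ _
  exact (oddShift_anticommute b b).mul_self_eq_zero

theorem oddShift_anticommute_postcomp {L : Lam →L[ℂ] Lam}
    (hL : ∀ a, Anticommute L (exteriorMul (θi a))) (b : Fin 2) :
    Anticommute (oddShift b) (postcomp L) :=
  .sum_left fun a _ =>
    (hL a).symm.postcomp.mul_left_of_commute (sigmaDeriv_commute_postcomp a b L)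

theorem oddShift_anticommute_thetaBarMul (b c : Fin 2) :
    Anticommute (oddShift b) (thetaBarMul c) :=
  oddShift_anticommute_postcomp (fun _ => exteriorMul_anticommute _ _) b

theorem thetaBarDeriv_anticommute_oddShift (b c : Fin 2) :
    Anticommute (thetaBarDeriv b) (oddShift c) :=
  (oddShift_anticommute_postcomp
    (fun a => contraction_anticommute_exteriorMul (theta_ne_thetaBar a b).symm) c).symm

theorem thetaBarDeriv_anticommute_thetaBarMul {b c : Fin 2} (hbc : b ≠ c) :
    Anticommute (thetaBarDeriv b) (thetaBarMul c) :=
  (contraction_anticommute_exteriorMul (thetaBar_injective.ne hbc)).postcomp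

theorem thetaBarDeriv_mul_thetaBarMul_add (b : Fin 2) :
    thetaBarDeriv b * thetaBarMul b + thetaBarMul b * thetaBarDeriv b = 1 := by
  ext f x S
  exact congr($(contraction_mul_exteriorMul_add (θbi b)) (f x) S)

theorem thetaBarDeriv_commute_twistFactor {b c : Fin 2} (hbc : b ≠ c) :
    Commute (thetaBarDeriv b) (twistFactor c) :=
  (thetaBarDeriv_anticommute_oddShift b c).commute_one_sub_mul
    (thetaBarDeriv_anticommute_thetaBarMul hbc)

theorem chiralityOp_commute_twistFactor {b c : Fin 2} (hbc : b ≠ c) :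
    Commute (chiralityOp b) (twistFactor c) := by
  rw [chiralityOp]
  exact (thetaBarDeriv_commute_twistFactor hbc).sub_left <|
    (oddShift_anticommute b c).commute_one_sub_mul (oddShift_anticommute_thetaBarMul b c)

theorem chiralityOp_mul_twistFactor (b : Fin 2) :
    chiralityOp b * twistFactor b = twistFactor b * thetaBarDeriv b :=
  (thetaBarDeriv_anticommute_oddShift b b).sub_mul_one_sub_mul (oddShift_mul_self b)
    (thetaBarDeriv_mul_thetaBarMul_add b)

theorem chiralityOp_mul_chiralTwist (b : Fin 2) :
    chiralityOp b * chiralTwist = chiralTwist * thetaBarDeriv b := by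
  obtain rfl | rfl : b = 0 ∨ b = 1 := by lia
  · calc chiralityOp 0 * (twistFactor 0 * twistFactor 1)
        = twistFactor 0 * (thetaBarDeriv 0 * twistFactor 1) := by
          rw [← mul_assoc, chiralityOp_mul_twistFactor, mul_assoc]
      _ = chiralTwist * thetaBarDeriv 0 := by
          rw [(thetaBarDeriv_commute_twistFactor zero_ne_one).eq, ← mul_assoc, chiralTwist]
  · calc chiralityOp 1 * (twistFactor 0 * twistFactor 1)
        = twistFactor 0 * (chiralityOp 1 * twistFactor 1) := by
          rw [← mul_assoc, (chiralityOp_commute_twistFactor one_ne_zero).eq, mul_assoc]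
      _ = chiralTwist * thetaBarDeriv 1 := by
          rw [chiralityOp_mul_twistFactor, ← mul_assoc, chiralTwist]

theorem isUnit_twistFactor (b : Fin 2) : IsUnit (twistFactor b) :=
  ((oddShift_anticommute_thetaBarMul b b).isNilpotent_mul (oddShift_mul_self b)).isUnit_one_sub

theorem chiralTwist_bijective : Function.Bijective chiralTwist :=
  (Module.End.isUnit_iff _).mp ((isUnit_twistFactor 0).mul (isUnit_twistFactor 1))

theorem DbOp_chiralTwist_eq_zero_iff (b : Fin 2) (h : Superfield) :
    DbOp b (chiralTwist h) = 0 ↔ thetaBarDeriv b h = 0 := by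
  rw [← coe_chiralityOp, ZeroMemClass.coe_eq_zero, ← Module.End.mul_apply,
    chiralityOp_mul_chiralTwist, Module.End.mul_apply,
    map_eq_zero_iff _ chiralTwist_bijective.injective]

/-- The superfield `φ + Σ_a θ^a ψ_a + F θ¹∧θ²` not involving the `θ̄^b`. -/
def thetaField (φ F : ScalarField) (ψ : Fin 2 → ScalarField) : Superfield :=
  smulConst unitLam φ + ∑ a, smulConst (eOp (θi a) unitLam) (ψ a) +
    smulConst (eOp (θi 0) (eOp (θi 1) unitLam)) F

theorem coe_thetaField (φ F : ScalarField) (ψ : Fin 2 → ScalarField) (x : Fin 4 → ℝ) :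
    thetaField φ F ψ x = thetaPoly (φ x) (F x) fun a => ψ a x := by
  simp [thetaField, thetaPoly]

theorem thetaBarDeriv_eq_zero_iff_exists_thetaField (h : Superfield) :
    (∀ b, thetaBarDeriv b h = 0) ↔ ∃ φ F ψ, h = thetaField φ F ψ := by
  constructor
  · intro hh
    let coeff (S : Finset (Fin 4)) : ScalarField := postcomp (ContinuousLinearMap.proj S) h
    refine ⟨coeff ∅, coeff {θi 0, θi 1}, fun a => coeff {θi a}, ?_⟩
    ext1
    funext x
    rw [coe_thetaField]
    exact eq_thetaPoly_of_dOp_thetaBar_eq_zero fun b => congr(($(hh b) : Superfield) x)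
  · rintro ⟨φ, F, ψ, rfl⟩ b
    ext1
    funext x
    exact (congrArg _ (coe_thetaField φ F ψ x)).trans (dOp_thetaBar_thetaPoly b _ _ _)

theorem oddShift_mul_thetaBarMul_smulConst (b : Fin 2) (v : Lam) (φ : ScalarField) :
    (oddShift b * thetaBarMul b) (smulConst v φ) =
      ∑ a, smulConst (eOp (θi a) (eOp (θbi b) v)) (sigmaDeriv a b φ) := by
  simp only [oddShift, thetaBarMul, thetaMul, Module.End.mul_apply, LinearMap.sum_apply,
    postcomp_smulConst, sigmaDeriv_smulConst, exteriorMul_apply]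

theorem oddShift_mul_thetaBarMul_mul_smulConst (v : Lam) (φ : ScalarField) :
    (oddShift 0 * thetaBarMul 0 * (oddShift 1 * thetaBarMul 1)) (smulConst v φ) =
      smulConst (eOp (θi 0) (eOp (θi 1) (eOp (θbi 0) (eOp (θbi 1) v)))) (waveOp φ) := by
  have reorder (a c : Fin 2) (u : Lam) :
      eOp (θi a) (eOp (θbi 0) (eOp (θi c) u)) = -eOp (θi a) (eOp (θi c) (eOp (θbi 0) u)) := by
    rw [eOp_eOp_comm (θbi 0), eOp_neg]
  have det_apply : waveOp φ =
      sigmaDeriv 1 0 (sigmaDeriv 0 1 φ) - sigmaDeriv 0 0 (sigmaDeriv 1 1 φ) :=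
    congr($(sigmaDeriv_mul_sub_mul_eq_waveOp.symm) φ)
  rw [Module.End.mul_apply, oddShift_mul_thetaBarMul_smulConst]
  simp only [map_sum, oddShift_mul_thetaBarMul_smulConst]
  simp only [Fin.sum_univ_two, reorder, eOp_eOp_self, eOp_eOp_comm (θi 1) (θi 0), neg_zero,
    neg_neg, smulConst_zero, smulConst_neg, zero_add, add_zero]
  rw [det_apply, map_sub]
  abel

theorem chiralTwist_smulConst (v : Lam) (φ : ScalarField) :
    chiralTwist (smulConst v φ) =
      smulConst v φ - ∑ a, ∑ b, smulConst (eOp (θi a) (eOp (θbi b) v)) (sigmaDeriv a b φ) +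
        smulConst (eOp (θi 0) (eOp (θi 1) (eOp (θbi 0) (eOp (θbi 1) v)))) (waveOp φ) := by
  have expand : chiralTwist = 1 - ∑ b, oddShift b * thetaBarMul b +
      oddShift 0 * thetaBarMul 0 * (oddShift 1 * thetaBarMul 1) := by
    rw [chiralTwist, twistFactor, twistFactor, Fin.sum_univ_two]
    simp only [sub_mul, mul_sub, one_mul, mul_one]
    abel
  rw [expand, Finset.sum_comm]
  simp only [LinearMap.add_apply, LinearMap.sub_apply, LinearMap.sum_apply, Module.End.one_apply,
    oddShift_mul_thetaBarMul_smulConst, oddShift_mul_thetaBarMul_mul_smulConst]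

theorem chiralTwist_smulConst_theta (c : Fin 2) (φ : ScalarField) :
    chiralTwist (smulConst (eOp (θi c) unitLam) φ) =
      smulConst (eOp (θi c) unitLam) φ -
        ∑ a, ∑ b, smulConst (eOp (θi c) (eOp (θi a) (eOp (θbi b) unitLam)))
          (sigmaDeriv a b φ) := by
  have reorder (a b : Fin 2) : eOp (θi a) (eOp (θbi b) (eOp (θi c) unitLam)) =
      eOp (θi c) (eOp (θi a) (eOp (θbi b) unitLam)) := by
    rw [eOp_eOp_comm (θbi b), eOp_neg, eOp_eOp_comm (θi a), neg_neg]
  have top_eq_zero :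
      eOp (θi 0) (eOp (θi 1) (eOp (θbi 0) (eOp (θbi 1) (eOp (θi c) unitLam)))) = 0 :=
    eOp_theta_eOp_theta_eq_zero <|
      eOp_eOp_eq_zero (eOp_eOp_eq_zero (eOp_eOp_self (θi c) unitLam) (θbi 1)) (θbi 0)
  simp only [chiralTwist_smulConst, reorder, top_eq_zero, smulConst_zero, add_zero]

theorem chiralTwist_smulConst_theta_theta (φ : ScalarField) :
    chiralTwist (smulConst (eOp (θi 0) (eOp (θi 1) unitLam)) φ) =
      smulConst (eOp (θi 0) (eOp (θi 1) unitLam)) φ := by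
  have eOp_theta_eq_zero (a : Fin 2) : eOp (θi a) (eOp (θi 0) (eOp (θi 1) unitLam)) = 0 := by
    obtain rfl | rfl : a = 0 ∨ a = 1 := by lia
    · exact eOp_eOp_self _ _
    · exact eOp_eOp_eq_zero (eOp_eOp_self _ _) _
  have eOp_theta_thetaBar_eq_zero (a b : Fin 2) := eOp_eOp_eq_zero (eOp_theta_eq_zero a) (θbi b)
  have top_eq_zero := eOp_theta_eOp_theta_eq_zero <|
    eOp_eOp_eq_zero (eOp_theta_thetaBar_eq_zero 0 1) (θbi 0)
  simp only [chiralTwist_smulConst, eOp_theta_thetaBar_eq_zero, top_eq_zero, smulConst_zero,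
    Finset.sum_const_zero, sub_zero, add_zero]

theorem sum_smulConst_sigmaDeriv_apply (w : Fin 2 → Fin 2 → Lam) (φ : ScalarField)
    (x : Fin 4 → ℝ) :
    (∑ a, ∑ b, smulConst (w a b) (sigmaDeriv a b φ) : Superfield) x =
      ∑ μ, ∑ a, ∑ b, (Complex.I * Gam μ a b * pdC μ φ x) • w a b := by
  simp only [Submodule.coe_sum, Finset.sum_apply, coe_smulConst, coe_sigmaDeriv, smul_eq_mul,
    Finset.sum_smul, pdC, Finset.sum_comm (t := (Finset.univ : Finset (Fin 4)))]

theorem chiralTwist_smulConst_theta_apply (c : Fin 2) (φ : ScalarField) (x : Fin 4 → ℝ) :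
    chiralTwist (smulConst (eOp (θi c) unitLam) φ) x =
      φ x • eOp (θi c) unitLam -
        ∑ μ, ∑ a, ∑ b, (Complex.I * Gam μ a b * pdC μ φ x) •
          eOp (θi c) (eOp (θi a) (eOp (θbi b) unitLam)) := by
  rw [chiralTwist_smulConst_theta, AddSubgroupClass.coe_sub, Pi.sub_apply, coe_smulConst,
    sum_smulConst_sigmaDeriv_apply]

theorem coe_chiralTwist_thetaField (φ F : ScalarField) (ψ : Fin 2 → ScalarField) :
    (chiralTwist (thetaField φ F ψ) : (Fin 4 → ℝ) → Lam) =
      chiralExpansion φ F fun a => ψ a := by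
  funext x
  have sum_reorder (t : Fin 2 → Fin 4 → Fin 2 → Fin 2 → Lam) :
      ∑ c, ∑ μ, ∑ a, ∑ b, t c μ a b = ∑ μ, ∑ a, ∑ b, ∑ c, t c μ a b :=
    Finset.sum_comm.trans (Finset.sum_congr rfl fun _ _ => Finset.sum_comm_cycle.symm)
  simp only [thetaField, map_add, map_sum, chiralTwist_smulConst unitLam,
    chiralTwist_smulConst_theta_theta, Submodule.coe_add, AddSubgroupClass.coe_sub, Pi.add_apply,
    Pi.sub_apply, sum_smulConst_sigmaDeriv_apply, coe_smulConst, coe_waveOp]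
  simp only [Submodule.coe_sum, Finset.sum_apply, chiralTwist_smulConst_theta_apply,
    Finset.sum_sub_distrib, sum_reorder, chiralExpansion]
  abel

theorem chiralExpansion_apply_of_thetaBar_notMem (φ F : (Fin 4 → ℝ) → ℂ)
    (ψ : Fin 2 → (Fin 4 → ℝ) → ℂ) (x : Fin 4 → ℝ) {S : Finset (Fin 4)} (hS : ∀ b, θbi b ∉ S) :
    chiralExpansion φ F ψ x S = thetaPoly (φ x) (F x) (fun a => ψ a x) S := by
  have eOp_thetaBar (b : Fin 2) (v : Lam) (T) (hT : θbi b ∉ T) : eOp (θbi b) v T = 0 :=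
    eOp_apply_of_notMem v hT
  have eOp_eOp_thetaBar (j : Fin 4) (b : Fin 2) (v : Lam) (T) (hT : θbi b ∉ T) :
      eOp j (eOp (θbi b) v) T = 0 := eOp_apply_eq_zero (eOp_thetaBar b v) hT
  have eOp_eOp_eOp_thetaBar (i j : Fin 4) (b : Fin 2) (v : Lam) :
      eOp i (eOp j (eOp (θbi b) v)) S = 0 :=
    eOp_apply_eq_zero (eOp_eOp_thetaBar j b v) (hS b)
  simp only [chiralExpansion, thetaPoly, Pi.add_apply, Pi.sub_apply, Finset.sum_apply,
    Pi.smul_apply, eOp_eOp_thetaBar _ _ _ _ (hS _), eOp_eOp_eOp_thetaBar, smul_zero,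
    Finset.sum_const_zero, sub_zero, add_zero]

theorem chiralExpansion_inj {φ F φ' F' : (Fin 4 → ℝ) → ℂ} {ψ ψ' : Fin 2 → (Fin 4 → ℝ) → ℂ} :
    chiralExpansion φ F ψ = chiralExpansion φ' F' ψ' ↔ φ = φ' ∧ F = F' ∧ ψ = ψ' := by
  refine ⟨fun h => ?_, by rintro ⟨rfl, rfl, rfl⟩; rfl⟩
  have thetaPoly_eq (x : Fin 4 → ℝ) {S : Finset (Fin 4)} (hS : ∀ b, θbi b ∉ S) :
      thetaPoly (φ x) (F x) (fun a => ψ a x) S =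
        thetaPoly (φ' x) (F' x) (fun a => ψ' a x) S := by
    rw [← chiralExpansion_apply_of_thetaBar_notMem φ F ψ x hS, h,
      chiralExpansion_apply_of_thetaBar_notMem φ' F' ψ' x hS]
  refine ⟨funext fun x => ?_, funext fun x => ?_, funext₂ fun a x => ?_⟩
  · simpa only [thetaPoly_apply_empty] using thetaPoly_eq x (S := ∅) (by simp)
  · simpa only [thetaPoly_apply_theta_theta] using
      thetaPoly_eq x (S := {θi 0, θi 1}) (by decide)
  · simpa only [thetaPoly_apply_theta] using
      thetaPoly_eq x (S := {θi a}) (by simp [(theta_ne_thetaBar a _).symm])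

theorem DbOp_eq_zero_iff_exists_thetaField (f : Superfield) :
    (DbOp 0 f = 0 ∧ DbOp 1 f = 0) ↔ ∃ φ F ψ, f = chiralTwist (thetaField φ F ψ) := by
  obtain ⟨h, rfl⟩ := chiralTwist_bijective.surjective f
  simp only [DbOp_chiralTwist_eq_zero_iff, chiralTwist_bijective.injective.eq_iff,
    ← thetaBarDeriv_eq_zero_iff_exists_thetaField, Fin.forall_fin_two]

end Superfields

/-- a smooth superfunction `f : ℝ⁴ → Λ` satisfies the chirality equations
`D̄₁f = 0`, `D̄₂f = 0` if and only if it is of the chiral normal form determined by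
(necessarily unique) smooth component fields `φ`, `ψ₁, ψ₂`, `F`. -/
theorem stmt17 (f : (Fin 4 → ℝ) → Lam) (hf : ContDiff ℝ (⊤ : ℕ∞) f) :
    (DbOp 0 f = 0 ∧ DbOp 1 f = 0) ↔
      ∃ (φ F : (Fin 4 → ℝ) → ℂ) (ψ : Fin 2 → (Fin 4 → ℝ) → ℂ),
        ContDiff ℝ (⊤ : ℕ∞) φ ∧ ContDiff ℝ (⊤ : ℕ∞) F ∧ (∀ a : Fin 2, ContDiff ℝ (⊤ : ℕ∞) (ψ a)) ∧
        f = chiralExpansion φ F ψ ∧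
        (∀ (φ' F' : (Fin 4 → ℝ) → ℂ) (ψ' : Fin 2 → (Fin 4 → ℝ) → ℂ),
          f = chiralExpansion φ' F' ψ' → φ' = φ ∧ F' = F ∧ ψ' = ψ) := by
  lift f to Superfield using hf
  rw [DbOp_eq_zero_iff_exists_thetaField]
  constructor
  · rintro ⟨φ, F, ψ, rfl⟩
    exact ⟨φ, F, fun a => ψ a, φ.2, F.2, fun a => (ψ a).2,
      coe_chiralTwist_thetaField φ F ψ, fun φ' F' ψ' h =>
        chiralExpansion_inj.mp (h.symm.trans (coe_chiralTwist_thetaField φ F ψ))⟩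
  · rintro ⟨φ, F, ψ, hφ, hF, hψ, hf, -⟩
    lift φ to ScalarField using hφ
    lift F to ScalarField using hF
    lift ψ to Fin 2 → ScalarField using hψ
    exact ⟨φ, F, ψ, Subtype.ext (hf.trans (coe_chiralTwist_thetaField φ F ψ).symm)⟩

end
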